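/- Among all trees T on n vertices with diameter greater than 3, the spectral radius of the complement satisfies λ_1(A(P_n^c)) ≤ λ_1(A(T^c)) ≤ λ_1(A(T(n−3,1)^c)), with equality on the left iff T ≅ P_n and on the right iff T ≅ T(n−3,1). -/

import Mathlib

open Matrix SimpleGraph
open scoped Classical

/-- `T(n-3,1)`: the tree obtained from a path on 3 vertices `0-1-2` by attaching
`n - 3` pendant vertices to the endpoint `2`. -/
def broom (n : ℕ) : SimpleGraph (Fin n) :=
  SimpleGraph.fromRel (fun i j =>
    ((i : ℕ) = 0 ∧ (j : ℕ) = 1) ∨ ((i : ℕ) = 2 ∧ (j : ℕ) ≠ 2 ∧ (j : ℕ) ≠ 0))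

/- As `A(Gᶜ) = J - 1 - A(G)`, the Perron vector `x` of `Gᶜ`, scaled to entry sum `1`, satisfies
`(λ + 1) x + A(G) x = 1`, and replacing `G` by a graph whose adjacency form is smaller at `x` can
only increase the spectral radius of the complement.

Upper bound: let `c` be a vertex at which `x` is minimal and let `a` be a non-neighbour of `c`. In a
breadth-first spanning tree rooted at `c`, redirect to `c` the parent of every vertex except `a`:
the form does not increase, and the tree becomes a broom.

Lower bound: let `m - 1` be the spectral radius of the complement of the path on `n` vertices, and
put `κ = 2 - m (m + 2 - n)`. The Perron entries of the path are nearly equal, and estimating them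
near the two leaves gives `(m + 2) κ > 1`. For a tree with adjacency matrix `A`, let `e = deg - 2`;
the vector `m 1 - e` solves `(m + A) y = m (m + 2) 1` up to the error `-A e`. If the tree has a
vertex of degree at least `3` and the spectral radius of its complement is at most `m - 1`, then the
Rayleigh quotient at this vector gives `(m + 2) κ ≤ 1`. -/

section SpectralBound

variable {ι : Type*} [Fintype ι] [DecidableEq ι] {M : Matrix ι ι ℝ} {lam : ℝ}

open scoped MatrixOrder in
lemma posSemidef_algebraMap_sub (hM : M.IsHermitian) (hlam : lam ∈ upperBounds (spectrum ℝ M)) :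
    (algebraMap ℝ (Matrix ι ι ℝ) lam - M).PosSemidef :=
  Matrix.le_iff.1 (le_algebraMap_of_spectrum_le (fun _ h => hlam h) hM)

lemma dotProduct_algebraMap_sub_mulVec (M : Matrix ι ι ℝ) (lam : ℝ) (x : ι → ℝ) :
    x ⬝ᵥ (algebraMap ℝ (Matrix ι ι ℝ) lam - M) *ᵥ x = lam * (x ⬝ᵥ x) - x ⬝ᵥ M *ᵥ x := by
  rw [sub_mulVec, Algebra.algebraMap_eq_smul_one, smul_mulVec, one_mulVec, dotProduct_sub,
    dotProduct_smul, smul_eq_mul]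

lemma dotProduct_mulVec_le (hM : M.IsHermitian) (hlam : lam ∈ upperBounds (spectrum ℝ M))
    (x : ι → ℝ) : x ⬝ᵥ M *ᵥ x ≤ lam * (x ⬝ᵥ x) := by
  have h := (posSemidef_algebraMap_sub hM hlam).dotProduct_mulVec_nonneg x
  rwa [star_trivial, dotProduct_algebraMap_sub_mulVec, sub_nonneg] at h

lemma mulVec_eq_smul_of_le_dotProduct_mulVec (hM : M.IsHermitian)
    (hlam : lam ∈ upperBounds (spectrum ℝ M)) {x : ι → ℝ}
    (hx : lam * (x ⬝ᵥ x) ≤ x ⬝ᵥ M *ᵥ x) : M *ᵥ x = lam • x := by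
  have h := ((posSemidef_algebraMap_sub hM hlam).dotProduct_mulVec_zero_iff x).1 <| by
    rw [star_trivial, dotProduct_algebraMap_sub_mulVec, sub_eq_zero]
    exact le_antisymm hx (dotProduct_mulVec_le hM hlam x)
  rw [sub_mulVec, Algebra.algebraMap_eq_smul_one, smul_mulVec, one_mulVec, sub_eq_zero] at h
  exact h.symm

lemma exists_mulVec_eq_smul (hlam : lam ∈ spectrum ℝ M) : ∃ x ≠ 0, M *ᵥ x = lam • x := by
  rw [← Matrix.spectrum_toLin', ← Module.End.hasEigenvalue_iff_mem_spectrum] at hlam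
  obtain ⟨x, hx⟩ := hlam.exists_hasEigenvector
  exact ⟨x, hx.2, by simpa only [toLin'_apply] using hx.apply_eq_smul⟩

lemma exists_nonneg_mulVec_eq_smul (hM : M.IsHermitian) (hnonneg : ∀ i j, 0 ≤ M i j)
    (hlam : IsGreatest (spectrum ℝ M) lam) : ∃ x, 0 ≤ x ∧ x ≠ 0 ∧ M *ᵥ x = lam • x := by
  obtain ⟨x, hx, hMx⟩ := exists_mulVec_eq_smul hlam.1
  refine ⟨|x|, abs_nonneg x, fun h => hx (funext fun i => abs_eq_zero.1 (congrFun h i)),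
    mulVec_eq_smul_of_le_dotProduct_mulVec hM hlam.2 ?_⟩
  calc lam * (|x| ⬝ᵥ |x|) = x ⬝ᵥ M *ᵥ x := by
        rw [hMx, dotProduct_smul, smul_eq_mul]
        simp only [dotProduct, Pi.abs_apply, abs_mul_abs_self]
    _ ≤ |x| ⬝ᵥ M *ᵥ |x| := by
        simp only [mulVec, dotProduct, Finset.mul_sum]
        refine Finset.sum_le_sum fun i _ => Finset.sum_le_sum fun j _ => ?_
        calc x i * (M i j * x j) ≤ |x i * (M i j * x j)| := le_abs_self _
          _ = |x| i * (M i j * |x| j) := by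
            rw [abs_mul, abs_mul, abs_of_nonneg (hnonneg i j), Pi.abs_apply, Pi.abs_apply]

end SpectralBound

section AdjMatrix

lemma isHermitian_adjMatrix {V : Type*} (G : SimpleGraph V) [DecidableRel G.Adj] :
    (G.adjMatrix ℝ).IsHermitian :=
  (conjTranspose_eq_transpose_of_trivial _).trans (transpose_adjMatrix G)

variable {V : Type*} [Fintype V] {G : SimpleGraph V} [DecidableRel G.Adj] {lam : ℝ} {x : V → ℝ}

lemma pos_of_adjMatrix_mulVec_eq_smul (hG : G.Preconnected) (hx : 0 ≤ x) (hx0 : x ≠ 0)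
    (hGx : G.adjMatrix ℝ *ᵥ x = lam • x) (v : V) : 0 < x v := by
  have eq_zero_of_adj {a b : V} (hab : G.Adj a b) (ha : x a = 0) : x b = 0 := by
    refine ((hx b).antisymm ?_).symm
    calc x b ≤ ∑ u ∈ G.neighborFinset a, x u :=
          Finset.single_le_sum (fun u _ => hx u) ((mem_neighborFinset G a b).2 hab)
      _ = lam * x a := by rw [← adjMatrix_mulVec_apply, hGx, Pi.smul_apply, smul_eq_mul]
      _ = 0 := by rw [ha, mul_zero]
  refine (hx v).lt_of_ne' fun hv => hx0 (funext fun u => ?_)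
  obtain ⟨p⟩ := hG v u
  induction p with
  | nil => exact hv
  | cons h _ ih => exact ih (eq_zero_of_adj h hv)

/-- `x` is the Perron vector of the complement of `G` with eigenvalue `lam`, normalized to have
entry sum `1`. As `A(Gᶜ) = J - 1 - A(G)`, the eigenvalue equation becomes
`(lam + 1) x + A(G) x = 1`, which is the form recorded here. -/
structure IsComplPerronVector (G : SimpleGraph V) [DecidableRel G.Adj] (lam : ℝ) (x : V → ℝ) :
    Prop where
  nonneg : 0 ≤ x
  sum_eq_one : ∑ v, x v = 1
  smul_add_mulVec : (lam + 1) • x + G.adjMatrix ℝ *ᵥ x = 1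

namespace IsComplPerronVector

lemma ne_zero (hx : IsComplPerronVector G lam x) : x ≠ 0 := by
  rintro rfl
  simpa using hx.sum_eq_one

lemma apply (hx : IsComplPerronVector G lam x) (v : V) :
    (lam + 1) * x v + (G.adjMatrix ℝ *ᵥ x) v = 1 :=
  congrFun hx.smul_add_mulVec v

lemma quadForm (hx : IsComplPerronVector G lam x) :
    (lam + 1) * (x ⬝ᵥ x) + x ⬝ᵥ G.adjMatrix ℝ *ᵥ x = 1 := by
  rw [← smul_eq_mul, ← dotProduct_smul, ← dotProduct_add, hx.smul_add_mulVec, dotProduct_one,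
    hx.sum_eq_one]

end IsComplPerronVector

end AdjMatrix

section ComplementSpectrum

variable {V W : Type*} [Fintype V] [Fintype W] [DecidableEq V] [DecidableEq W]
  {G H : SimpleGraph V} {K : SimpleGraph W}
  [DecidableRel G.Adj] [DecidableRel H.Adj] [DecidableRel K.Adj] {lam mu : ℝ} {x : V → ℝ}

lemma spectrum_adjMatrix_compl_congr (e : G ≃g K) :
    spectrum ℝ (Gᶜ.adjMatrix ℝ) = spectrum ℝ (Kᶜ.adjMatrix ℝ) := by
  have e' : Gᶜ ≃g Kᶜ := ⟨e.toEquiv, by simp +contextual [compl_adj, e.map_adj_iff]⟩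
  rw [← e'.reindex_adjMatrix (α := ℝ)]
  exact (AlgEquiv.spectrum_eq (reindexAlgEquiv ℝ ℝ e'.toEquiv) _).symm

lemma adjMatrix_compl_mulVec (G : SimpleGraph V) [DecidableRel G.Adj] (x : V → ℝ) :
    Gᶜ.adjMatrix ℝ *ᵥ x = (fun _ => ∑ u, x u) - x - G.adjMatrix ℝ *ᵥ x := by
  have h := congrArg (· *ᵥ x) (one_add_adjMatrix_add_compl_adjMatrix_eq_of_one G (α := ℝ))
  simp only [compl_adjMatrix_eq_adjMatrix_compl, add_mulVec, one_mulVec] at h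
  rw [eq_sub_iff_add_eq, eq_sub_iff_add_eq, add_comm, add_comm _ (G.adjMatrix ℝ *ᵥ x),
    ← add_assoc, h]
  funext v
  simp [mulVec, dotProduct]

lemma dotProduct_adjMatrix_compl_mulVec (G : SimpleGraph V) [DecidableRel G.Adj] (x : V → ℝ) :
    x ⬝ᵥ Gᶜ.adjMatrix ℝ *ᵥ x = (∑ v, x v) ^ 2 - x ⬝ᵥ x - x ⬝ᵥ G.adjMatrix ℝ *ᵥ x := by
  rw [adjMatrix_compl_mulVec, dotProduct_sub, dotProduct_sub, sq]
  simp only [dotProduct, Finset.sum_mul]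

lemma sq_sum_le (hlam : lam ∈ upperBounds (spectrum ℝ (Gᶜ.adjMatrix ℝ))) (x : V → ℝ) :
    (∑ v, x v) ^ 2 ≤ (lam + 1) * (x ⬝ᵥ x) + x ⬝ᵥ G.adjMatrix ℝ *ᵥ x := by
  have h := dotProduct_mulVec_le (isHermitian_adjMatrix Gᶜ) hlam x
  rw [dotProduct_adjMatrix_compl_mulVec] at h
  linarith

lemma isComplPerronVector_iff :
    IsComplPerronVector G lam x ↔ 0 ≤ x ∧ ∑ v, x v = 1 ∧ Gᶜ.adjMatrix ℝ *ᵥ x = lam • x := by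
  have key (hx : ∑ v, x v = 1) : Gᶜ.adjMatrix ℝ *ᵥ x = lam • x ↔
      (lam + 1) • x + G.adjMatrix ℝ *ᵥ x = 1 := by
    rw [adjMatrix_compl_mulVec, hx, sub_eq_iff_eq_add, sub_eq_iff_eq_add, add_smul, one_smul,
      add_right_comm, eq_comm]
    rfl
  exact ⟨fun h => ⟨h.nonneg, h.sum_eq_one, (key h.sum_eq_one).2 h.smul_add_mulVec⟩,
    fun ⟨hx, hsum, hGx⟩ => ⟨hx, hsum, (key hsum).1 hGx⟩⟩

lemma exists_isComplPerronVector (hlam : IsGreatest (spectrum ℝ (Gᶜ.adjMatrix ℝ)) lam) :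
    ∃ x, IsComplPerronVector G lam x := by
  obtain ⟨x, hx, hx0, hGx⟩ := exists_nonneg_mulVec_eq_smul (isHermitian_adjMatrix Gᶜ)
    (fun i j => by rw [adjMatrix_apply]; split_ifs <;> norm_num) hlam
  have hsum : ∑ v, x v ≠ 0 := fun h =>
    hx0 (funext fun v => (Finset.sum_eq_zero_iff_of_nonneg fun u _ => hx u).1 h v (by simp))
  refine ⟨(∑ v, x v)⁻¹ • x, isComplPerronVector_iff.2 ⟨?_, ?_, ?_⟩⟩
  · exact smul_nonneg (inv_nonneg.2 (Finset.sum_nonneg fun v _ => hx v)) hx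
  · simp only [Pi.smul_apply, smul_eq_mul, ← Finset.mul_sum, inv_mul_cancel₀ hsum]
  · rw [mulVec_smul, hGx, smul_comm]

namespace IsComplPerronVector

lemma le_of_quadForm_le (hx : IsComplPerronVector G lam x)
    (hmu : mu ∈ upperBounds (spectrum ℝ (Hᶜ.adjMatrix ℝ)))
    (hle : x ⬝ᵥ H.adjMatrix ℝ *ᵥ x ≤ x ⬝ᵥ G.adjMatrix ℝ *ᵥ x) : lam ≤ mu := by
  have hpos : 0 < x ⬝ᵥ x := by
    simpa only [star_trivial] using dotProduct_star_self_pos_iff.2 hx.ne_zero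
  have hray := sq_sum_le hmu x
  rw [hx.sum_eq_one] at hray
  nlinarith [hx.quadForm]

lemma congr_of_quadForm_le (hx : IsComplPerronVector G lam x)
    (hlam : lam ∈ upperBounds (spectrum ℝ (Hᶜ.adjMatrix ℝ)))
    (hle : x ⬝ᵥ H.adjMatrix ℝ *ᵥ x ≤ x ⬝ᵥ G.adjMatrix ℝ *ᵥ x) : IsComplPerronVector H lam x := by
  refine isComplPerronVector_iff.2 ⟨hx.nonneg, hx.sum_eq_one,
    mulVec_eq_smul_of_le_dotProduct_mulVec (isHermitian_adjMatrix Hᶜ) hlam ?_⟩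
  rw [dotProduct_adjMatrix_compl_mulVec, hx.sum_eq_one]
  linarith [hx.quadForm]

end IsComplPerronVector

end ComplementSpectrum

section Broom

variable {V : Type*} {G H : SimpleGraph V}

/-- The graph joining each vertex `u ≠ c` to its parent `π u`: the tree rooted at `c` with parent
function `π`, provided that iterating `π` always leads to `c`. -/
def parentGraph (c : V) (π : V → V) : SimpleGraph V :=
  SimpleGraph.fromRel fun u v => u ≠ c ∧ π u = v

lemma parentGraph_le {c : V} {π : V → V} (h : ∀ u ≠ c, G.Adj u (π u)) :
    parentGraph c π ≤ G := by
  rintro u v ⟨-, ⟨hu, rfl⟩ | ⟨hv, rfl⟩⟩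
  exacts [h u hu, (h v hv).symm]

lemma exists_adj_dist_add_one_eq (hG : G.Connected) {r v : V} (hv : v ≠ r) :
    ∃ w, G.Adj w v ∧ G.dist r w + 1 = G.dist r v := by
  obtain ⟨p, hp⟩ := hG.exists_walk_length_eq_dist v r
  cases p with
  | nil => exact absurd rfl hv
  | @cons _ w _ hadj q =>
    refine ⟨w, hadj.symm, ?_⟩
    have hle : G.dist r w ≤ q.length := q.length_reverse ▸ dist_le q.reverse
    have hge := hG.dist_triangle (u := r) (v := w) (w := v)
    rw [dist_eq_one_iff_adj.2 hadj.symm] at hge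
    rw [Walk.length_cons, G.dist_comm] at hp
    omega

/-- The broom with vertices labelled by `V`: the path `a - b - c` with all other vertices pendant
at `c`. For distinct `a`, `b`, `c` it is a copy of `broom n`. -/
def broomAt (a b c : V) : SimpleGraph V :=
  SimpleGraph.fromRel fun u v => (u = a ∧ v = b) ∨ (u = c ∧ v ≠ c ∧ v ≠ a)

lemma broomAt_eq_parentGraph {a b c : V} (hab : a ≠ b) (hac : a ≠ c) :
    broomAt a b c = parentGraph c (Function.update (fun _ => c) a b) := by
  ext u v
  simp only [broomAt, parentGraph, SimpleGraph.fromRel_adj, Function.update_apply]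
  grind

lemma nonempty_broom_iso_broomAt [Fintype V] {a b c : V} (hab : a ≠ b) (hac : a ≠ c)
    (hbc : b ≠ c) {n : ℕ} (hn : Fintype.card V = n) : Nonempty (broom n ≃g broomAt a b c) := by
  have h3 : 3 ≤ n := by
    rw [← hn, ← Finset.card_eq_three.2 ⟨a, b, c, hab, hac, hbc, rfl⟩]
    exact Finset.card_le_univ _
  let e := (Fintype.equivFinOfCardEq hn).symm
  obtain ⟨σ, hσ⟩ := Equiv.Perm.exists_extending_pair (e ∘ Fin.castLE h3) ![a, b, c]
    (e.injective.comp (Fin.castLE_injective h3)) (by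
      intro i j
      fin_cases i <;> fin_cases j <;> simp [hab, hac, hbc, hab.symm, hac.symm, hbc.symm])
  have key (k : Fin 3) (i : Fin n) : σ (e i) = ![a, b, c] k ↔ (i : ℕ) = k := by
    rw [← hσ, Function.comp_apply, σ.apply_eq_iff_eq, e.apply_eq_iff_eq, Fin.ext_iff,
      Fin.val_castLE]
  have ha (i : Fin n) : σ (e i) = a ↔ (i : ℕ) = 0 := key 0 i
  have hb (i : Fin n) : σ (e i) = b ↔ (i : ℕ) = 1 := key 1 i
  have hc (i : Fin n) : σ (e i) = c ↔ (i : ℕ) = 2 := key 2 i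
  refine ⟨⟨e.trans σ, ?_⟩⟩
  simp only [broomAt, broom, SimpleGraph.fromRel_adj, Equiv.trans_apply, ne_eq,
    EmbeddingLike.apply_eq_iff_eq, ha, hb, hc, implies_true]

variable [Fintype V] [DecidableRel G.Adj] [DecidableRel H.Adj] {x : V → ℝ}

lemma quadForm_mono (hGH : G ≤ H) (hx : 0 ≤ x) :
    x ⬝ᵥ G.adjMatrix ℝ *ᵥ x ≤ x ⬝ᵥ H.adjMatrix ℝ *ᵥ x := by
  simp only [dotProduct, adjMatrix_mulVec_apply]
  gcongr with u
  · exact hx u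
  · exact fun v _ _ => hx v
  · exact fun v => by simpa only [mem_neighborFinset] using @hGH u v

lemma adj_of_mulVec_eq {c : V} (hx : ∀ v, 0 < x v) (hsub : ∀ u, G.Adj c u → H.Adj c u)
    (heq : (G.adjMatrix ℝ *ᵥ x) c = (H.adjMatrix ℝ *ᵥ x) c) {u : V} (hu : H.Adj c u) :
    G.Adj c u := by
  by_contra hGu
  rw [adjMatrix_mulVec_apply, adjMatrix_mulVec_apply] at heq
  refine heq.not_lt (Finset.sum_lt_sum_of_subset (fun w hw => ?_) ((mem_neighborFinset H c u).2 hu)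
    (mt (mem_neighborFinset G c u).1 hGu) (hx u) fun w _ _ => (hx w).le)
  exact (mem_neighborFinset H c w).2 (hsub w ((mem_neighborFinset G c w).1 hw))

lemma eq_of_le_of_mulVec_eq (hx : ∀ v, 0 < x v) (hGH : G ≤ H)
    (heq : G.adjMatrix ℝ *ᵥ x = H.adjMatrix ℝ *ᵥ x) : G = H :=
  hGH.antisymm fun c _ hu => adj_of_mulVec_eq hx (fun _ h => hGH h) (congrFun heq c) hu

lemma quadForm_parentGraph {c : V} {π : V → V} {f : V → ℕ} (hf : ∀ u ≠ c, f (π u) < f u)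
    [DecidableRel (parentGraph c π).Adj] (x : V → ℝ) :
    x ⬝ᵥ (parentGraph c π).adjMatrix ℝ *ᵥ x = 2 * ∑ u with u ≠ c, x u * x (π u) := by
  let P : Matrix V V ℝ := .of fun u v => if u ≠ c ∧ π u = v then 1 else 0
  have hlt {u v : V} (h : u ≠ c ∧ π u = v) : f v < f u := h.2 ▸ hf u h.1
  have hP : (parentGraph c π).adjMatrix ℝ = P + Pᵀ := by
    ext u v
    have hadj : (parentGraph c π).Adj u v ↔ (u ≠ c ∧ π u = v) ∨ (v ≠ c ∧ π v = u) :=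
      (SimpleGraph.fromRel_adj _ _ _).trans <| and_iff_right_of_imp <| by
        rintro (h | h) rfl <;> exact (hlt h).ne rfl
    simp only [P, adjMatrix_apply, Matrix.add_apply, transpose_apply, of_apply]
    by_cases huv : u ≠ c ∧ π u = v <;> by_cases hvu : v ≠ c ∧ π v = u
    · exact absurd (hlt huv) (hlt hvu).not_gt
    all_goals simp [hadj, huv, hvu]
  have hPx : x ⬝ᵥ P *ᵥ x = ∑ u with u ≠ c, x u * x (π u) := by
    simp [P, dotProduct, mulVec, ite_and, Finset.sum_ite]
  rw [hP, add_mulVec, dotProduct_add, dotProduct_transpose_mulVec, hPx, two_mul]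

lemma exists_quadForm_broomAt_le (hG : G.Connected) {a c : V} (hac : a ≠ c) (hadj : ¬ G.Adj a c)
    (hx : 0 ≤ x) (hc : ∀ v, x c ≤ x v) :
    ∃ b, a ≠ b ∧ b ≠ c ∧ G.Adj a b ∧
      x ⬝ᵥ (broomAt a b c).adjMatrix ℝ *ᵥ x ≤ x ⬝ᵥ G.adjMatrix ℝ *ᵥ x := by
  choose! π hπ using fun v (hv : v ≠ c) => exists_adj_dist_add_one_eq hG hv
  have hlt : ∀ u ≠ c, G.dist c (π u) < G.dist c u := fun u hu => Nat.lt_of_succ_le (hπ u hu).2.le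
  have hab := (hπ a hac).1.symm
  refine ⟨π a, hab.ne, fun h => hadj (h ▸ hab), hab, ?_⟩
  calc x ⬝ᵥ (broomAt a (π a) c).adjMatrix ℝ *ᵥ x
      = 2 * ∑ u with u ≠ c, x u * x (Function.update (fun _ => c) a (π a) u) := by
        rw [broomAt_eq_parentGraph hab.ne hac]
        refine quadForm_parentGraph (f := G.dist c) (fun u hu => ?_) x
        by_cases h : u = a
        · simpa [h] using hlt a hac
        · simpa [h] using hG.pos_dist_of_ne (Ne.symm hu)
    _ ≤ 2 * ∑ u with u ≠ c, x u * x (π u) := by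
        gcongr with u
        · exact hx u
        · rw [Function.update_apply]
          split_ifs with h
          exacts [h ▸ le_rfl, hc _]
    _ = x ⬝ᵥ (parentGraph c π).adjMatrix ℝ *ᵥ x :=
        (quadForm_parentGraph hlt x).symm
    _ ≤ x ⬝ᵥ G.adjMatrix ℝ *ᵥ x := quadForm_mono (parentGraph_le fun u hu => (hπ u hu).1.symm) hx

lemma eq_broomAt_of_mulVec_eq {a b c : V} [DecidableRel (broomAt a b c).Adj] (hab : G.Adj a b)
    (hac : a ≠ c) (hadj : ¬ G.Adj a c) (hx : ∀ v, 0 < x v)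
    (heq : (broomAt a b c).adjMatrix ℝ *ᵥ x = G.adjMatrix ℝ *ᵥ x) : G = broomAt a b c := by
  have hcB {v : V} : (broomAt a b c).Adj c v ↔ v ≠ c ∧ v ≠ a := by
    simp only [broomAt, SimpleGraph.fromRel_adj]
    grind
  have hc {v : V} (h : v ≠ c ∧ v ≠ a) : G.Adj c v := by
    refine adj_of_mulVec_eq hx (fun u hu => hcB.2 ⟨hu.ne', ?_⟩) (congrFun heq c).symm (hcB.2 h)
    rintro rfl
    exact hadj hu.symm
  refine (eq_of_le_of_mulVec_eq hx ?_ heq).symm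
  rintro u v ⟨-, (⟨rfl, rfl⟩ | ⟨rfl, h⟩) | (⟨rfl, rfl⟩ | ⟨rfl, h⟩)⟩
  exacts [hab, hc h, hab.symm, (hc h).symm]

end Broom

section Diameter

variable {V : Type*} {G : SimpleGraph V} {u v : V}

lemma connected_compl_of_two_lt_dist (h : 2 < G.dist u v) : Gᶜ.Connected := by
  have hreach : G.Reachable u v := .of_dist_ne_zero (by omega)
  obtain ⟨huv, hnadj, hcommon⟩ := two_lt_edist_iff.1 <|
    hreach.coe_dist_eq_edist (G := G) ▸ (by exact_mod_cast h : (2 : ℕ∞) < G.dist u v)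
  have hadj : Gᶜ.Adj u v := (compl_adj G u v).2 ⟨huv, hnadj⟩
  refine connected_iff_exists_forall_reachable Gᶜ |>.2 ⟨u, fun w => ?_⟩
  by_cases hu : u = w ∨ Gᶜ.Adj u w
  · rcases hu with rfl | hu
    exacts [.rfl, hu.reachable]
  by_cases hv : v = w ∨ Gᶜ.Adj v w
  · rcases hv with rfl | hv
    exacts [hadj.reachable, hadj.reachable.trans hv.reachable]
  simp only [compl_adj, not_or, not_and, not_not] at hu hv
  exact absurd (hcommon ▸ ⟨hu.2 hu.1, hv.2 hv.1⟩ : w ∈ (∅ : Set V)) (Set.notMem_empty w)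

end Diameter

section UpperBound

variable {V : Type*} [Fintype V] {G : SimpleGraph V} [DecidableRel G.Adj]

lemma IsComplPerronVector.pos {lam : ℝ} {x : V → ℝ} (hx : IsComplPerronVector G lam x)
    (hG : Gᶜ.Preconnected) (v : V) : 0 < x v :=
  pos_of_adjMatrix_mulVec_eq_smul hG hx.nonneg hx.ne_zero (isComplPerronVector_iff.1 hx).2.2 v

variable [DecidableEq V] [Nontrivial V]

lemma exists_broomAt_extremal {lam : ℝ} (hG : G.Connected) (hGc : Gᶜ.Connected)
    (hlam : IsGreatest (spectrum ℝ (Gᶜ.adjMatrix ℝ)) lam) :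
    ∃ a b c : V, a ≠ b ∧ a ≠ c ∧ b ≠ c ∧
      ∀ mu ∈ upperBounds (spectrum ℝ ((broomAt a b c)ᶜ.adjMatrix ℝ)),
        lam ≤ mu ∧ (lam = mu → G = broomAt a b c) := by
  obtain ⟨x, hx⟩ := exists_isComplPerronVector hlam
  obtain ⟨c, hc⟩ := Finite.exists_min x
  obtain ⟨a, hca⟩ := hGc.preconnected.exists_adj_of_nontrivial c
  rw [compl_adj, G.adj_comm] at hca
  obtain ⟨b, hab, hbc, hadj, hle⟩ := exists_quadForm_broomAt_le hG hca.1.symm hca.2 hx.nonneg hc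
  refine ⟨a, b, c, hab, hca.1.symm, hbc, fun mu hmu => ⟨hx.le_of_quadForm_le hmu hle, ?_⟩⟩
  rintro rfl
  have hB := hx.congr_of_quadForm_le hmu hle
  exact eq_broomAt_of_mulVec_eq hadj hca.1.symm hca.2 (hx.pos hGc.preconnected)
    (add_left_cancel (hB.smul_add_mulVec.trans hx.smul_add_mulVec.symm))

theorem le_broom {n : ℕ} {lamT lamB : ℝ} (hG : G.Connected) (hGc : Gᶜ.Connected)
    (hn : Fintype.card V = n) (hlamT : IsGreatest (spectrum ℝ (Gᶜ.adjMatrix ℝ)) lamT)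
    (hlamB : IsGreatest (spectrum ℝ ((broom n)ᶜ.adjMatrix ℝ)) lamB) :
    lamT ≤ lamB ∧ (lamT = lamB ↔ Nonempty (G ≃g broom n)) := by
  obtain ⟨a, b, c, hab, hac, hbc, hext⟩ := exists_broomAt_extremal hG hGc hlamT
  obtain ⟨e⟩ := nonempty_broom_iso_broomAt hab hac hbc hn
  obtain ⟨hle, heq⟩ := hext lamB (spectrum_adjMatrix_compl_congr e ▸ hlamB.2)
  exact ⟨hle, fun h => heq h ▸ ⟨e.symm⟩,
    fun ⟨e'⟩ => hlamT.unique (spectrum_adjMatrix_compl_congr e' ▸ hlamB)⟩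

end UpperBound

section DegreeExcess

variable {V : Type*} [Fintype V] {G : SimpleGraph V} [DecidableRel G.Adj]

/-- The excess `deg v - 2` of the degree of `v` over the degree of an inner vertex of a path. -/
def degExcess (G : SimpleGraph V) [DecidableRel G.Adj] (v : V) : ℝ := G.degree v - 2

lemma degExcess_nonneg {v : V} (hv : 2 ≤ G.degree v) : 0 ≤ degExcess G v :=
  sub_nonneg.2 (by exact_mod_cast hv)

lemma degExcess_nonpos {v : V} (hv : G.degree v ≤ 2) : degExcess G v ≤ 0 :=
  sub_nonpos.2 (by exact_mod_cast hv)

lemma degExcess_of_degree_eq_one {v : V} (hv : G.degree v = 1) : degExcess G v = -1 := by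
  rw [degExcess, hv]
  norm_num

lemma two_mul_posPart_sub_le_sq_degExcess {v : V} (hv : 0 < G.degree v) :
    2 * (degExcess G v)⁺ - degExcess G v ≤ degExcess G v ^ 2 := by
  obtain h | h : G.degree v = 1 ∨ 2 ≤ G.degree v := by omega
  · norm_num [degExcess_of_degree_eq_one h]
  · rw [posPart_of_nonneg (degExcess_nonneg h)]
    obtain ⟨k, hk⟩ := Nat.exists_eq_add_of_le h
    have hv : degExcess G v = k := by
      rw [degExcess, hk]
      push_cast
      ring
    rw [hv, two_mul, add_sub_cancel_right]
    exact_mod_cast Nat.le_self_pow two_ne_zero k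

lemma posPart_degExcess_le {v : V} (hv : 0 < G.degree v) :
    (degExcess G v)⁺ ≤ degExcess G v + 1 := by
  have h1 : (1 : ℝ) ≤ G.degree v := by exact_mod_cast hv
  exact sup_le (by linarith) (by rw [degExcess]; linarith)

lemma sum_adjMatrix_mulVec (G : SimpleGraph V) [DecidableRel G.Adj] (x : V → ℝ) :
    ∑ v, (G.adjMatrix ℝ *ᵥ x) v = degExcess G ⬝ᵥ x + 2 * ∑ v, x v := by
  calc ∑ v, (G.adjMatrix ℝ *ᵥ x) v = x ⬝ᵥ G.adjMatrix ℝ *ᵥ 1 := by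
        rw [← one_dotProduct, ← dotProduct_transpose_mulVec, transpose_adjMatrix]
    _ = ∑ v, (degExcess G v * x v + 2 * x v) := by
        refine Finset.sum_congr rfl fun v _ => ?_
        rw [show (G.adjMatrix ℝ *ᵥ 1) v = G.degree v by simp [adjMatrix_mulVec_apply], degExcess]
        ring
    _ = degExcess G ⬝ᵥ x + 2 * ∑ v, x v := by
        rw [Finset.sum_add_distrib, Finset.mul_sum, dotProduct]

lemma sum_degExcess (G : SimpleGraph V) [DecidableRel G.Adj] :
    ∑ v, degExcess G v = 2 * G.edgeFinset.card - 2 * Fintype.card V := by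
  have h : ∑ v, (G.degree v : ℝ) = 2 * G.edgeFinset.card := by
    exact_mod_cast G.sum_degrees_eq_twice_card_edges
  simp only [degExcess, Finset.sum_sub_distrib, h, Finset.sum_const, Finset.card_univ,
    nsmul_eq_mul, mul_comm]

lemma neg_two_le_sum_degExcess (hG : G.Connected) : -2 ≤ ∑ v, degExcess G v := by
  have h : (Fintype.card V : ℝ) ≤ G.edgeFinset.card + 1 := by
    have := hG.card_vert_le_card_edgeSet_add_one
    rw [Nat.card_eq_fintype_card, Nat.card_eq_fintype_card, ← edgeFinset_card] at this
    exact_mod_cast this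
  rw [sum_degExcess]
  linarith

lemma sum_degExcess_of_isTree (hG : G.IsTree) : ∑ v, degExcess G v = -2 := by
  have h : (G.edgeFinset.card : ℝ) + 1 = Fintype.card V := by exact_mod_cast hG.card_edgeFinset
  rw [sum_degExcess]
  linarith

lemma one_le_sum_posPart_degExcess {w : V} (hw : 2 < G.degree w) :
    1 ≤ ∑ v, (degExcess G v)⁺ := by
  have h : (3 : ℝ) ≤ G.degree w := by exact_mod_cast hw
  calc 1 ≤ degExcess G w := by rw [degExcess]; linarith
    _ ≤ (degExcess G w)⁺ := le_posPart _
    _ ≤ ∑ v, (degExcess G v)⁺ := Finset.single_le_sum (f := fun v => (degExcess G v)⁺)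
        (fun v _ => posPart_nonneg _) (Finset.mem_univ w)

lemma sum_posPart_degExcess_le [Nontrivial V] (hG : G.IsTree) :
    ∑ v, (degExcess G v)⁺ ≤ Fintype.card V - 2 := by
  have h := Finset.sum_le_sum fun v (_ : v ∈ Finset.univ) =>
    posPart_degExcess_le (hG.connected.preconnected.degree_pos_of_nontrivial v)
  simp only [Finset.sum_add_distrib, sum_degExcess_of_isTree hG, Finset.sum_const,
    Finset.card_univ, nsmul_eq_mul, mul_one] at h
  linarith

lemma two_mul_sum_posPart_degExcess_add_two_le [Nontrivial V] (hG : G.IsTree) :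
    2 * ∑ v, (degExcess G v)⁺ + 2 ≤ degExcess G ⬝ᵥ degExcess G := by
  have h := Finset.sum_le_sum fun v (_ : v ∈ Finset.univ) =>
    two_mul_posPart_sub_le_sq_degExcess (hG.connected.preconnected.degree_pos_of_nontrivial v)
  simp only [Finset.sum_sub_distrib, ← Finset.mul_sum, sum_degExcess_of_isTree hG, sq] at h
  rw [dotProduct]
  linarith

lemma two_le_degree_or_two_le_degree_of_adj (hG : G.Connected) (hV : 2 < Fintype.card V) {u v : V}
    (huv : G.Adj u v) : 2 ≤ G.degree u ∨ 2 ≤ G.degree v := by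
  have two_le {a b c : V} (hb : G.Adj a b) (hc : G.Adj a c) (hbc : b ≠ c) : 2 ≤ G.degree a :=
    Finset.one_lt_card.2 ⟨b, (mem_neighborFinset G a b).2 hb, c, (mem_neighborFinset G a c).2 hc,
      hbc⟩
  obtain ⟨w, -, hw⟩ : ∃ w ∈ Finset.univ, w ∉ ({u, v} : Finset V) :=
    Finset.exists_mem_notMem_of_card_lt_card (Finset.card_le_two.trans_lt hV)
  obtain ⟨p⟩ := hG.preconnected u w
  obtain ⟨d, -, hfst, hsnd⟩ := p.exists_boundary_dart {u, v} (by simp) (by simpa using hw)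
  have hd := d.adj
  simp only [Set.mem_insert_iff, Set.mem_singleton_iff, not_or] at hfst hsnd
  rcases hfst with h | h <;> rw [h] at hd
  exacts [.inl (two_le huv hd (Ne.symm hsnd.2)), .inr (two_le huv.symm hd (Ne.symm hsnd.1))]

lemma degExcess_mul_le_of_adj (hG : G.Connected) (hV : 2 < Fintype.card V) {u v : V}
    (huv : G.Adj u v) :
    degExcess G u * degExcess G v ≤ (degExcess G u)⁺ * (degExcess G v)⁺ := by
  rcases two_le_degree_or_two_le_degree_of_adj hG hV huv with h | h
  · rw [posPart_of_nonneg (degExcess_nonneg h)]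
    exact mul_le_mul_of_nonneg_left (le_posPart _) (degExcess_nonneg h)
  · rw [posPart_of_nonneg (degExcess_nonneg h)]
    exact mul_le_mul_of_nonneg_right (le_posPart _) (degExcess_nonneg h)

lemma quadForm_degExcess_le (hG : G.Connected) (hV : 2 < Fintype.card V) :
    degExcess G ⬝ᵥ G.adjMatrix ℝ *ᵥ degExcess G ≤ (∑ v, (degExcess G v)⁺) ^ 2 := by
  rw [sq, Finset.sum_mul]
  refine Finset.sum_le_sum fun u _ => ?_
  rw [adjMatrix_mulVec_apply, Finset.mul_sum, Finset.mul_sum]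
  calc ∑ v ∈ G.neighborFinset u, degExcess G u * degExcess G v
      ≤ ∑ v ∈ G.neighborFinset u, (degExcess G u)⁺ * (degExcess G v)⁺ :=
        Finset.sum_le_sum fun v hv =>
          degExcess_mul_le_of_adj hG hV ((mem_neighborFinset G u v).1 hv)
    _ ≤ ∑ v, (degExcess G u)⁺ * (degExcess G v)⁺ :=
        Finset.sum_le_univ_sum_of_nonneg fun v => mul_nonneg (posPart_nonneg _) (posPart_nonneg _)

end DegreeExcess

section LowerBound

variable {V : Type*} [Fintype V] {G : SimpleGraph V} [DecidableRel G.Adj] {lam : ℝ} {x : V → ℝ}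

namespace IsComplPerronVector

lemma smul_apply_le_one (hx : IsComplPerronVector G lam x) (v : V) : (lam + 1) * x v ≤ 1 := by
  have h : 0 ≤ (G.adjMatrix ℝ *ᵥ x) v := by
    rw [adjMatrix_mulVec_apply]
    exact Finset.sum_nonneg fun u _ => hx.nonneg u
  linarith [hx.apply v]

lemma degExcess_dotProduct (hx : IsComplPerronVector G lam x) :
    degExcess G ⬝ᵥ x = Fintype.card V - (lam + 3) := by
  have h := congrArg (fun y => ∑ v, y v) hx.smul_add_mulVec
  simp only [Pi.add_apply, Pi.smul_apply, smul_eq_mul, Finset.sum_add_distrib, ← Finset.mul_sum,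
    sum_adjMatrix_mulVec, hx.sum_eq_one, Pi.one_apply, Finset.sum_const, Finset.card_univ,
    nsmul_eq_mul, mul_one] at h
  linarith

lemma le_sq_mul_apply (hx : IsComplPerronVector G lam x) (v : V) :
    lam + 1 - G.degree v ≤ (lam + 1) ^ 2 * x v := by
  have h : (lam + 1) * (G.adjMatrix ℝ *ᵥ x) v ≤ G.degree v := by
    rw [adjMatrix_mulVec_apply, Finset.mul_sum, ← card_neighborFinset_eq_degree,
      ← mul_one (Finset.card _ : ℝ), ← nsmul_eq_mul]
    exact Finset.sum_le_card_nsmul _ _ _ fun u _ => hx.smul_apply_le_one u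
  linear_combination h - (lam + 1) * hx.apply v

lemma card_sub_two_le_of_degree_le_two (hx : IsComplPerronVector G lam x)
    (hG2 : ∀ v, G.degree v ≤ 2) : (Fintype.card V : ℝ) - 2 ≤ lam + 1 := by
  have h : degExcess G ⬝ᵥ x ≤ 0 := Finset.sum_nonpos fun v _ =>
    mul_nonpos_of_nonpos_of_nonneg (degExcess_nonpos (hG2 v)) (hx.nonneg v)
  linarith [hx.degExcess_dotProduct]

lemma cube_mul_apply_le_of_degree_eq_one (hx : IsComplPerronVector G lam x)
    (hG2 : ∀ v, G.degree v ≤ 2) {v : V} (hv : G.degree v = 1) :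
    (lam + 1) ^ 3 * x v ≤ (lam + 1) ^ 2 - (lam + 1) + 2 := by
  obtain ⟨w, hw⟩ := Finset.card_eq_one.1 hv
  have hxv := hx.apply v
  rw [adjMatrix_mulVec_apply, hw, Finset.sum_singleton] at hxv
  have hw2 : (G.degree w : ℝ) ≤ 2 := by exact_mod_cast hG2 w
  linear_combination hx.le_sq_mul_apply w + (lam + 1) ^ 2 * hxv + hw2

lemma cube_mul_le_of_degree_le_two [Nontrivial V] (hx : IsComplPerronVector G lam x)
    (hG : G.Connected) (hG2 : ∀ v, G.degree v ≤ 2) :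
    (lam + 1) ^ 3 * (lam + 3 - Fintype.card V) ≤ 2 * ((lam + 1) ^ 2 - (lam + 1) + 2) := by
  have hterm (v : V) : (lam + 1) ^ 3 * (-degExcess G v * x v) ≤
      ((lam + 1) ^ 2 - (lam + 1) + 2) * -degExcess G v := by
    obtain h | h : G.degree v = 1 ∨ G.degree v = 2 := by
      have := hG.preconnected.degree_pos_of_nontrivial v
      have := hG2 v
      omega
    · simpa [degExcess_of_degree_eq_one h] using hx.cube_mul_apply_le_of_degree_eq_one hG2 h
    · simp [degExcess, h]
  calc (lam + 1) ^ 3 * (lam + 3 - Fintype.card V)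
      = ∑ v, (lam + 1) ^ 3 * (-degExcess G v * x v) := by
        simp only [← Finset.mul_sum, neg_mul, Finset.sum_neg_distrib]
        rw [← dotProduct, hx.degExcess_dotProduct, neg_sub]
    _ ≤ ((lam + 1) ^ 2 - (lam + 1) + 2) * -∑ v, degExcess G v := by
        rw [← Finset.sum_neg_distrib, Finset.mul_sum]
        exact Finset.sum_le_sum fun v _ => hterm v
    _ ≤ ((lam + 1) ^ 2 - (lam + 1) + 2) * 2 := by
        refine mul_le_mul_of_nonneg_left (neg_le.2 (neg_two_le_sum_degExcess hG)) ?_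
        nlinarith [sq_nonneg lam, sq_nonneg (lam + 1)]
    _ = 2 * ((lam + 1) ^ 2 - (lam + 1) + 2) := mul_comm _ _

lemma one_lt_mul_of_degree_le_two [Nontrivial V] (hx : IsComplPerronVector G lam x)
    (hG : G.Connected) (hG2 : ∀ v, G.degree v ≤ 2) (hV : 5 ≤ Fintype.card V) :
    1 < (lam + 3) * (2 - (lam + 1) * (lam + 3 - Fintype.card V)) := by
  have hm : 3 ≤ lam + 1 := by
    have : (5 : ℝ) ≤ Fintype.card V := by exact_mod_cast hV
    linarith [hx.card_sub_two_le_of_degree_le_two hG2]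
  have hcube := hx.cube_mul_le_of_degree_le_two hG hG2
  refine lt_of_mul_lt_mul_left (a := (lam + 1) ^ 2) ?_ (sq_nonneg _)
  calc (lam + 1) ^ 2 * 1 < (lam + 3) * (2 * (lam + 1 - 2)) := by nlinarith
    _ ≤ (lam + 3) * ((lam + 1) ^ 2 * (2 - (lam + 1) * (lam + 3 - Fintype.card V))) :=
        mul_le_mul_of_nonneg_left (by linear_combination hcube) (by linarith)
    _ = _ := by ring

end IsComplPerronVector

lemma le_quadForm_degExcess [DecidableEq V] (hG : G.IsTree)
    (hlam : lam ∈ upperBounds (spectrum ℝ (Gᶜ.adjMatrix ℝ))) :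
    (2 - (lam + 1) * (lam + 3 - Fintype.card V)) * ((lam + 1) * Fintype.card V + 2) +
      (lam + 1) * (degExcess G ⬝ᵥ degExcess G - 4) ≤
    degExcess G ⬝ᵥ G.adjMatrix ℝ *ᵥ degExcess G := by
  let e := degExcess G
  have he := sum_degExcess_of_isTree hG
  have hsum : ∑ v, ((lam + 1) • 1 - e) v = (lam + 1) * Fintype.card V + 2 := by
    simp only [e, Pi.sub_apply, Pi.smul_apply, Pi.one_apply, smul_eq_mul, mul_one,
      Finset.sum_sub_distrib, he, Finset.sum_const, Finset.card_univ, nsmul_eq_mul]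
    ring
  have hAe : 1 ⬝ᵥ G.adjMatrix ℝ *ᵥ e = e ⬝ᵥ e - 4 := by
    rw [one_dotProduct, sum_adjMatrix_mulVec, he]
    ring
  have hmul : (lam + 1) • ((lam + 1) • 1 - e) + G.adjMatrix ℝ *ᵥ ((lam + 1) • 1 - e) =
      ((lam + 1) * (lam + 3)) • 1 - G.adjMatrix ℝ *ᵥ e := by
    have hA1 : G.adjMatrix ℝ *ᵥ 1 = e + (2 : ℝ) • 1 := by
      funext v
      simp [adjMatrix_mulVec_apply, e, degExcess]
    rw [mulVec_sub, mulVec_smul, hA1]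
    module
  have hray := sq_sum_le hlam ((lam + 1) • 1 - e)
  rw [← smul_eq_mul, ← dotProduct_smul, ← dotProduct_add, hmul, dotProduct_sub, dotProduct_smul,
    dotProduct_one, hsum, sub_dotProduct, smul_dotProduct, hAe] at hray
  simp only [smul_eq_mul] at hray
  linear_combination hray

lemma mul_le_one_of_two_lt_degree [DecidableEq V] (hG : G.IsTree) {w : V} (hw : 2 < G.degree w)
    (hlam : lam ∈ upperBounds (spectrum ℝ (Gᶜ.adjMatrix ℝ))) (hV : Fintype.card V - 2 ≤ lam + 1) :
    (lam + 3) * (2 - (lam + 1) * (lam + 3 - Fintype.card V)) ≤ 1 := by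
  have hV2 : 2 < Fintype.card V := hw.trans (G.degree_lt_card_verts w)
  have : Nontrivial V := Fintype.one_lt_card_iff_nontrivial.1 (Nat.lt_of_succ_lt hV2)
  have hs1 := one_le_sum_posPart_degExcess hw
  have hsm := sum_posPart_degExcess_le hG
  have hsE := two_mul_sum_posPart_degExcess_add_two_le hG
  have hsQ := quadForm_degExcess_le hG.connected hV2
  have hEQ := le_quadForm_degExcess hG hlam
  set s := ∑ v, (degExcess G v)⁺
  set κ := 2 - (lam + 1) * (lam + 3 - Fintype.card V)
  have hm : 0 < lam + 1 := by linarith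
  have hE : (lam + 1) * (2 * s - 2) ≤ (lam + 1) * (degExcess G ⬝ᵥ degExcess G - 4) :=
    mul_le_mul_of_nonneg_left (by linarith) hm.le
  have hQ : s ^ 2 ≤ (lam + 1) * s :=
    (sq s).trans_le (mul_le_mul_of_nonneg_right (hsm.trans hV) (by linarith))
  have hs : (lam + 1) * 1 ≤ (lam + 1) * s := mul_le_mul_of_nonneg_left hs1 hm.le
  refine le_of_mul_le_mul_left ?_ hm
  calc (lam + 1) * ((lam + 3) * κ) = κ * ((lam + 1) * Fintype.card V + 2) - κ ^ 2 := by ring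
    _ ≤ degExcess G ⬝ᵥ G.adjMatrix ℝ *ᵥ degExcess G -
          (lam + 1) * (degExcess G ⬝ᵥ degExcess G - 4) := by linarith [sq_nonneg κ]
    _ ≤ (lam + 1) * s - (lam + 1) * (2 * s - 2) := by linarith
    _ ≤ (lam + 1) * 1 := by linarith

end LowerBound

section Path

variable {V : Type*} [Fintype V] {G : SimpleGraph V} {r : V}

lemma dist_lt_card (hG : G.Connected) (u v : V) : G.dist u v < Fintype.card V := by
  obtain ⟨p, hp, hlen⟩ := hG.exists_path_of_dist u v
  exact hlen ▸ hp.length_lt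

lemma nonempty_iso_pathGraph_of_injective_dist (hG : G.Connected)
    (hr : Function.Injective (G.dist r)) : Nonempty (G ≃g pathGraph (Fintype.card V)) := by
  have hadj {u v : V} (h : G.dist r u + 1 = G.dist r v) : G.Adj u v := by
    have hv : v ≠ r := by
      rintro rfl
      simp at h
    obtain ⟨w, hwv, hw⟩ := exists_adj_dist_add_one_eq hG hv
    exact hr (by omega : G.dist r w = G.dist r u) ▸ hwv
  let f (v : V) : Fin (Fintype.card V) := ⟨G.dist r v, dist_lt_card hG r v⟩
  have hf : Function.Injective f := fun u v h => hr (congrArg Fin.val h)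
  have hbij : Function.Bijective f :=
    (Fintype.bijective_iff_injective_and_card f).2 ⟨hf, (Fintype.card_fin _).symm⟩
  refine ⟨⟨Equiv.ofBijective f hbij, fun {u v} => ?_⟩⟩
  rw [Equiv.ofBijective_apply, Equiv.ofBijective_apply, pathGraph_adj]
  refine ⟨fun h => h.elim hadj fun h => (hadj h).symm, fun h => ?_⟩
  have hne : G.dist r u ≠ G.dist r v := hr.ne h.ne
  rcases h.diff_dist_adj (u := r) with h | h | h <;> simp only [f] <;> omega

variable [DecidableRel G.Adj]

lemma eq_of_adj_of_dist_eq_add_one (hG : G.Connected) (hG2 : ∀ v, G.degree v ≤ 2)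
    (hr : G.degree r = 1) {p u v : V} (hpu : G.Adj p u) (hpv : G.Adj p v)
    (hu : G.dist r p + 1 = G.dist r u) (hv : G.dist r p + 1 = G.dist r v) : u = v := by
  by_contra huv
  simp only [← card_neighborFinset_eq_degree] at hr hG2
  rw [← mem_neighborFinset] at hpu hpv
  by_cases hp : p = r
  · exact huv (Finset.card_le_one.1 hr.le u (hp ▸ hpu) v (hp ▸ hpv))
  · obtain ⟨t, htp, ht⟩ := exists_adj_dist_add_one_eq hG hp
    refine (hG2 p).not_gt (Finset.two_lt_card.2
      ⟨t, (mem_neighborFinset G p t).2 htp.symm, u, hpu, v, hpv, ?_, ?_, huv⟩) <;>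
    · rintro rfl
      omega

lemma injective_dist_of_degree_le_two (hG : G.Connected) (hG2 : ∀ v, G.degree v ≤ 2)
    (hr : G.degree r = 1) : Function.Injective (G.dist r) := by
  intro u v huv
  induction hk : G.dist r u generalizing u v with
  | zero => exact (hG.dist_eq_zero_iff.1 hk).symm.trans (hG.dist_eq_zero_iff.1 (huv ▸ hk))
  | succ k ih =>
    have ne_root {w : V} (hw : G.dist r w = k + 1) : w ≠ r := by
      rintro rfl
      simp at hw
    obtain ⟨p, hpu, hp⟩ := exists_adj_dist_add_one_eq hG (ne_root hk)
    obtain ⟨q, hqv, hq⟩ := exists_adj_dist_add_one_eq hG (ne_root (huv ▸ hk))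
    obtain rfl : p = q := ih (by omega) (by omega)
    exact eq_of_adj_of_dist_eq_add_one hG hG2 hr hpu hqv hp hq

theorem nonempty_iso_pathGraph_of_isTree [Nontrivial V] (hG : G.IsTree)
    (hG2 : ∀ v, G.degree v ≤ 2) : Nonempty (G ≃g pathGraph (Fintype.card V)) := by
  obtain ⟨r, hr⟩ := hG.exists_vert_degree_one_of_nontrivial
  exact nonempty_iso_pathGraph_of_injective_dist hG.connected
    (injective_dist_of_degree_le_two hG.connected hG2 hr)

end Path

section PathBound

variable {n : ℕ} {lamP lamT : ℝ}

lemma degree_pathGraph_le_two (i : Fin n) : (pathGraph n).degree i ≤ 2 := by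
  calc (pathGraph n).degree i = (((pathGraph n).neighborFinset i).map Fin.valEmbedding).card := by
        rw [Finset.card_map, card_neighborFinset_eq_degree]
    _ ≤ ({(i : ℕ) + 1, (i : ℕ) - 1} : Finset ℕ).card := by
        refine Finset.card_le_card fun k hk => ?_
        obtain ⟨j, hj, rfl⟩ := Finset.mem_map.1 hk
        rw [mem_neighborFinset, pathGraph_adj] at hj
        rw [Fin.valEmbedding_apply, Finset.mem_insert, Finset.mem_singleton]
        omega
    _ ≤ 2 := Finset.card_le_two

variable {V : Type*} [Fintype V] [Nontrivial V] {G : SimpleGraph V} [DecidableRel G.Adj]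

lemma five_le_card (hGc : Gᶜ.Connected) {w : V} (hw : 2 < G.degree w) : 5 ≤ Fintype.card V := by
  have hpos := hGc.preconnected.degree_pos_of_nontrivial w
  rw [degree_compl] at hpos
  omega

variable [DecidableEq V]

lemma pathGraph_lt_of_two_lt_degree (hG : G.IsTree) (hGc : Gᶜ.Connected)
    (hn : Fintype.card V = n) (hlamP : IsGreatest (spectrum ℝ ((pathGraph n)ᶜ.adjMatrix ℝ)) lamP)
    (hlamT : IsGreatest (spectrum ℝ (Gᶜ.adjMatrix ℝ)) lamT) {w : V} (hw : 2 < G.degree w) :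
    lamP < lamT := by
  by_contra! hle
  have hn5 : 5 ≤ n := hn ▸ five_le_card hGc hw
  have : Nontrivial (Fin n) := Fin.nontrivial_iff_two_le.2 (by omega)
  have hP : (pathGraph n).Connected := by
    obtain ⟨k, rfl⟩ := Nat.exists_eq_add_of_le' (show 1 ≤ n by omega)
    exact pathGraph_connected k
  obtain ⟨x, hx⟩ := exists_isComplPerronVector hlamP
  have hcard := hx.card_sub_two_le_of_degree_le_two degree_pathGraph_le_two
  have hlt := hx.one_lt_mul_of_degree_le_two hP degree_pathGraph_le_two (by rwa [Fintype.card_fin])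
  rw [Fintype.card_fin, ← hn] at hcard hlt
  exact hlt.not_ge (mul_le_one_of_two_lt_degree hG hw (upperBounds_mono_mem hle hlamT.2) hcard)

theorem pathGraph_le (hG : G.IsTree) (hGc : Gᶜ.Connected) (hn : Fintype.card V = n)
    (hlamP : IsGreatest (spectrum ℝ ((pathGraph n)ᶜ.adjMatrix ℝ)) lamP)
    (hlamT : IsGreatest (spectrum ℝ (Gᶜ.adjMatrix ℝ)) lamT) :
    lamP ≤ lamT ∧ (lamP = lamT ↔ Nonempty (G ≃g pathGraph n)) := by
  have eq_of_iso (e : G ≃g pathGraph n) : lamP = lamT :=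
    hlamP.unique (spectrum_adjMatrix_compl_congr e ▸ hlamT)
  by_cases h2 : ∀ v, G.degree v ≤ 2
  · have hiso := hn ▸ nonempty_iso_pathGraph_of_isTree hG h2
    have heq := hiso.elim eq_of_iso
    exact ⟨heq.le, iff_of_true heq hiso⟩
  · push Not at h2
    obtain ⟨w, hw⟩ := h2
    have hlt := pathGraph_lt_of_two_lt_degree hG hGc hn hlamP hlamT hw
    exact ⟨hlt.le, iff_of_false hlt.ne fun ⟨e⟩ => hlt.ne (eq_of_iso e)⟩

end PathBound

/- The broom has diameter `3`, so it is itself among the trees compared here. -/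
theorem stmt8_general {V : Type*} [Fintype V] [DecidableEq V] (T : SimpleGraph V)
    [DecidableRel T.Adj] (hT : T.IsTree) (hd : ∃ u v : V, 2 < T.dist u v)
    {n : ℕ} (hn : Fintype.card V = n) (lamP lamT lamB : ℝ)
    (hlamP : IsGreatest (spectrum ℝ ((pathGraph n)ᶜ.adjMatrix ℝ)) lamP)
    (hlamT : IsGreatest (spectrum ℝ (Tᶜ.adjMatrix ℝ)) lamT)
    (hlamB : IsGreatest (spectrum ℝ ((broom n)ᶜ.adjMatrix ℝ)) lamB) :
    lamP ≤ lamT ∧ lamT ≤ lamB ∧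
      (lamP = lamT ↔ Nonempty (T ≃g pathGraph n)) ∧
      (lamT = lamB ↔ Nonempty (T ≃g broom n)) := by
  obtain ⟨u, v, huv⟩ := hd
  have : Nontrivial V := ⟨u, v, fun h => by simp [h] at huv⟩
  have hTc := connected_compl_of_two_lt_dist huv
  obtain ⟨hP, hP_eq⟩ := pathGraph_le hT hTc hn hlamP hlamT
  obtain ⟨hB, hB_eq⟩ := le_broom hT.connected hTc hn hlamT hlamB
  exact ⟨hP, hB, hP_eq, hB_eq⟩

/-- Among all trees `T` on `n` vertices with diameter `> 3`, the adjacency spectral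
radius of the complement is minimized exactly by the path `P_n` and maximized
exactly by `T(n-3,1)`. -/
theorem stmt8 {n : ℕ} (T : SimpleGraph (Fin n)) [DecidableRel T.Adj]
    (hT : T.IsTree) (hd : ∃ u v : Fin n, 3 < T.dist u v)
    (lamP lamT lamB : ℝ)
    (hlamP : IsGreatest (spectrum ℝ ((pathGraph n)ᶜ.adjMatrix ℝ)) lamP)
    (hlamT : IsGreatest (spectrum ℝ (Tᶜ.adjMatrix ℝ)) lamT)
    (hlamB : IsGreatest (spectrum ℝ ((broom n)ᶜ.adjMatrix ℝ)) lamB) :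
    lamP ≤ lamT ∧ lamT ≤ lamB ∧
      (lamP = lamT ↔ Nonempty (T ≃g pathGraph n)) ∧
      (lamT = lamB ↔ Nonempty (T ≃g broom n)) :=
  stmt8_general T hT (hd.imp fun _ ⟨v, hv⟩ => ⟨v, Nat.lt_of_succ_lt hv⟩) (Fintype.card_fin n)
    lamP lamT lamB hlamP hlamT hlamB
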